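/- Let μ be any σ-invariant Borel probability measure on X. For every N ≥ 2, μ(σ^{h N}(C N) Δ C N) < (1 / b^{N−1}) · μ(C N), where C N = { x ∈ X : the block x_0 x_1 … x_{h N − 1} equals B N } and Δ denotes symmetric difference. -/

import Mathlib

open MeasureTheory Filter Topology
open scoped ENNReal

/-- `m`-fold concatenation of a word. -/
def wordPow (w : List ℕ) (m : ℕ) : List ℕ := (List.replicate m w).flatten

/-- The words of the generalized del Junco–Rudolph construction:
`B 0 = [0]`, `B (k+1) = (B k)^(a·b^k) ++ [1] ++ (B k)^((b-a)·b^k)`. -/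
def Bword (b a : ℕ) : ℕ → List ℕ
  | 0 => [0]
  | k + 1 => wordPow (Bword b a k) (a * b ^ k) ++ [1] ++ wordPow (Bword b a k) ((b - a) * b ^ k)

/-- The height sequence: `h 0 = 1`, `h (k+1) = b^(k+1) * h k + 1`. -/
def hseq (b : ℕ) : ℕ → ℕ
  | 0 => 1
  | k + 1 => b ^ (k + 1) * hseq b k + 1

/-- The word `w` occurs in the word `v` at position `p` (0-based). -/
def OccursAt (w v : List ℕ) (p : ℕ) : Prop :=
  p + w.length ≤ v.length ∧ (v.drop p).take w.length = w

/-- The block of `x` of length `w.length` starting at index `m` equals the word `w`. -/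
def BlockEq (x : ℤ → ℕ) (m : ℤ) (w : List ℕ) : Prop :=
  ∀ i : ℕ, i < w.length → x (m + i) = w.getD i 0

/-- Membership in the subshift `X`: every finite block of `x` occurs as a consecutive
subword of some `B k`. -/
def InX (b a : ℕ) (x : ℤ → ℕ) : Prop :=
  ∀ (m : ℤ) (l : ℕ), ∃ k p, OccursAt (List.ofFn fun i : Fin l => x (m + (i : ℕ))) (Bword b a k) p

/-- The left shift `(σ x) n = x (n+1)` on `{0,1}^ℤ`. -/
def shiftMap (x : ℤ → ℕ) : ℤ → ℕ := fun n => x (n + 1)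

/-- The cylinder set `C N ⊆ X` of points whose block `x_0 … x_{h N - 1}` equals `B N`. -/
def Cset (b a N : ℕ) : Set (ℤ → ℕ) :=
  {x | InX b a x ∧ BlockEq x 0 (Bword b a N)}

/-!
Every `x ∈ X` decomposes into copies of `B n`, some neighbouring ones separated by a `1`, a spacer
of level `n`. A spacer of level `n` is either the middle `1` of a copy of `B (n + 1)` in the
decomposition or a spacer of level `n + 1`, never both, so the decomposition of `x` can be read off
from `x` itself. These are closed conditions on `x`; they hold for the one-sided limit `y` of the
words `B k`, and every point of `X` is a limit of shifts of `y`.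

For an invariant measure, let `m n` and `s n` be the densities of the copies of `B n` and of the
spacers of level `n`. A spacer is followed by `b ^ n` adjacent copies of `B n`, and a copy of
`B (n + 1)` consists of `b ^ (n + 1)` copies of `B n` and a spacer, so `b ^ n * s n ≤ m n`,
`b ^ (n + 1) * m (n + 1) ≤ m n` and `s n = m (n + 1) + s (n + 1)`. An occurrence of `B N` outside
the decomposition is centred at a spacer of level `N`, hence the density `u` of such occurrences is
at most `s N`. If `x` lies in `C N` but not in `σ^{h N} (C N)`, then `x` has such an occurrence at
`0` or a spacer of level `N` at `-1`. Therefore the symmetric difference has measure at most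
`2 * (s N + u)`, while `C N` has measure `m N + u`.
-/

section Words

variable {b a n i : ℕ} {x : ℤ → ℕ} {m s : ℤ}

theorem length_wordPow (w : List ℕ) (k : ℕ) : (wordPow w k).length = k * w.length := by
  simp [wordPow]

theorem blockEq_singleton_iff {c : ℕ} : BlockEq x m [c] ↔ x m = c := by
  simp [BlockEq]

theorem blockEq_append_iff {u v : List ℕ} :
    BlockEq x m (u ++ v) ↔ BlockEq x m u ∧ BlockEq x (m + u.length) v := by
  refine ⟨fun h => ⟨fun i hi => ?_, fun i hi => ?_⟩, fun ⟨hu, hv⟩ i hi => ?_⟩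
  · rw [h i (by rw [List.length_append]; omega), List.getD_append _ _ _ _ hi]
  · have := h (u.length + i) (by rw [List.length_append]; omega)
    rwa [List.getD_append_right _ _ _ _ (by omega), Nat.add_sub_cancel_left, Nat.cast_add,
      ← add_assoc] at this
  · rw [List.length_append] at hi
    by_cases hiu : i < u.length
    · rw [hu i hiu, List.getD_append _ _ _ _ hiu]
    · rw [List.getD_append_right _ _ _ _ (by omega), ← hv (i - u.length) (by omega)]
      congr 1
      omega

theorem blockEq_wordPow_iff {w : List ℕ} {k : ℕ} :
    BlockEq x m (wordPow w k) ↔ ∀ i < k, BlockEq x (m + i * w.length) w := by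
  induction k with
  | zero => simp [wordPow, BlockEq]
  | succ k ih =>
    have hsucc : wordPow w (k + 1) = wordPow w k ++ w := by
      simp [wordPow, List.replicate_succ']
    rw [hsucc, blockEq_append_iff, ih, length_wordPow, Nat.forall_lt_succ_right, Nat.cast_mul]

/-- The position of the middle `1` in `B (n + 1)`. -/
def spacerOffset (b a n : ℕ) : ℕ := a * b ^ n * hseq b n

/-- The position of the `i`-th copy of `B n` in `B (n + 1)`, counting copies from `0`. -/
def blockOffset (b a n i : ℕ) : ℕ := i * hseq b n + if a * b ^ n ≤ i then 1 else 0

theorem hseq_pos (b n : ℕ) : 0 < hseq b n := by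
  cases n <;> simp [hseq]

theorem mul_pow_add_sub_mul_pow (hab : a ≤ b) (n : ℕ) :
    a * b ^ n + (b - a) * b ^ n = b ^ (n + 1) := by
  rw [← add_mul, Nat.add_sub_cancel' hab, pow_succ']

theorem mul_pow_pos (ha : 0 < a) (hab : a < b) (n : ℕ) : 0 < a * b ^ n :=
  Nat.mul_pos ha (Nat.pow_pos (by omega))

theorem mul_pow_lt_pow_succ (hab : a < b) (n : ℕ) : a * b ^ n < b ^ (n + 1) := by
  rw [pow_succ']
  exact Nat.mul_lt_mul_of_pos_right hab (Nat.pow_pos (by omega))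

theorem hseq_succ_eq (hab : a ≤ b) (n : ℕ) :
    hseq b (n + 1) = spacerOffset b a n + 1 + (b - a) * b ^ n * hseq b n := by
  rw [hseq, ← mul_pow_add_sub_mul_pow hab, spacerOffset, add_mul, add_right_comm]

theorem length_Bword (hab : a ≤ b) (n : ℕ) : (Bword b a n).length = hseq b n := by
  induction n with
  | zero => rfl
  | succ n ih =>
    simp only [Bword, List.length_append, length_wordPow, ih, hseq_succ_eq hab, spacerOffset,
      List.length_singleton]

theorem hseq_le_spacerOffset (ha : 0 < a) (hab : a < b) (n : ℕ) :
    hseq b n ≤ spacerOffset b a n :=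
  Nat.le_mul_of_pos_left _ (mul_pow_pos ha hab n)

theorem spacerOffset_add_hseq_lt (hab : a < b) (n : ℕ) :
    spacerOffset b a n + hseq b n < hseq b (n + 1) := by
  have : hseq b n ≤ (b - a) * b ^ n * hseq b n :=
    Nat.le_mul_of_pos_left _ (Nat.mul_pos (by omega) (Nat.pow_pos (by omega)))
  rw [hseq_succ_eq hab.le]
  omega

theorem blockOffset_of_lt (hi : i < a * b ^ n) : blockOffset b a n i = i * hseq b n := by
  rw [blockOffset, if_neg (by omega), add_zero]

theorem blockOffset_add (b a n i : ℕ) :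
    blockOffset b a n (a * b ^ n + i) = spacerOffset b a n + 1 + i * hseq b n := by
  rw [blockOffset, if_pos (by omega), spacerOffset]
  ring

theorem blockOffset_zero (ha : 0 < a) (hab : a < b) (n : ℕ) : blockOffset b a n 0 = 0 := by
  rw [blockOffset_of_lt (mul_pow_pos ha hab n), zero_mul]

theorem blockOffset_pow_sub_one_add (hab : a < b) (n : ℕ) :
    blockOffset b a n (b ^ (n + 1) - 1) + hseq b n = hseq b (n + 1) := by
  have hlt := mul_pow_lt_pow_succ hab n
  obtain ⟨k, hk⟩ : ∃ k, b ^ (n + 1) = k + 1 := ⟨b ^ (n + 1) - 1, by omega⟩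
  rw [blockOffset, if_pos (by omega), hseq, hk, Nat.add_sub_cancel]
  ring

theorem blockOffset_add_hseq_le (hi : i < b ^ (n + 1)) :
    blockOffset b a n i + hseq b n ≤ hseq b (n + 1) := by
  have := Nat.mul_le_mul_right (hseq b n) (Nat.succ_le_of_lt hi)
  rw [Nat.succ_mul] at this
  rw [hseq, blockOffset]
  split_ifs <;> omega

theorem strictMono_blockOffset (b a n : ℕ) : StrictMono (blockOffset b a n) := by
  refine strictMono_nat_of_lt_succ fun i => ?_
  have := hseq_pos b n
  rw [blockOffset, blockOffset, Nat.succ_mul]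
  split_ifs <;> omega

theorem blockEq_Bword_succ_iff (hab : a ≤ b) :
    BlockEq x m (Bword b a (n + 1)) ↔ x (m + spacerOffset b a n) = 1 ∧
      ∀ i < b ^ (n + 1), BlockEq x (m + blockOffset b a n i) (Bword b a n) := by
  have hcast (i : ℕ) : m + ((a * b ^ n * hseq b n + 1 : ℕ) : ℤ) + i * hseq b n =
      m + blockOffset b a n (a * b ^ n + i) := by
    rw [blockOffset_add, spacerOffset]; push_cast; ring
  rw [Bword, blockEq_append_iff, blockEq_append_iff, blockEq_wordPow_iff, blockEq_wordPow_iff,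
    blockEq_singleton_iff, List.length_append, length_wordPow, length_Bword hab,
    List.length_singleton]
  simp only [hcast]
  rw [← spacerOffset]
  refine ⟨fun ⟨⟨hfst, hmid⟩, hsnd⟩ => ⟨hmid, fun i hi => ?_⟩, fun ⟨hmid, hsub⟩ =>
    ⟨⟨fun i hi => ?_, hmid⟩, fun i hi => hsub _ ?_⟩⟩
  · rcases lt_or_ge i (a * b ^ n) with hlt | hge
    · rw [blockOffset_of_lt hlt, Nat.cast_mul]
      exact hfst i hlt
    · obtain ⟨k, rfl⟩ := Nat.exists_eq_add_of_le hge
      exact hsnd k (by rw [← mul_pow_add_sub_mul_pow hab] at hi; omega)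
  · rw [← Nat.cast_mul, ← blockOffset_of_lt hi]
    exact hsub i (by rw [← mul_pow_add_sub_mul_pow hab]; omega)
  · rw [← mul_pow_add_sub_mul_pow hab]
    omega

/-- A spacer of level `n`: the position `s` of the symbol `1` inside an occurrence of
`B n ++ [1] ++ B n` in `x`. -/
def IsSpacer (b a n : ℕ) (x : ℤ → ℕ) (s : ℤ) : Prop :=
  BlockEq x (s - hseq b n) (Bword b a n) ∧ x s = 1 ∧ BlockEq x (s + 1) (Bword b a n)

/-- The position `p` starts an expected occurrence of `B n`, that is, one which belongs to the
hierarchical decomposition of `x ∈ X`. Such an occurrence of `B (n + 1)` is recognized by its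
middle `1`, which is a spacer of level `n` but not of level `n + 1`. -/
def IsExpected (b a : ℕ) : ℕ → (ℤ → ℕ) → ℤ → Prop
  | 0, x, p => x p = 0
  | n + 1, x, p => IsSpacer b a n x (p + spacerOffset b a n) ∧
      ¬ IsSpacer b a (n + 1) x (p + spacerOffset b a n)

theorem BlockEq.isSpacer (ha : 0 < a) (hab : a < b) (h : BlockEq x m (Bword b a (n + 1))) :
    IsSpacer b a n x (m + spacerOffset b a n) := by
  obtain ⟨hmid, hsub⟩ := (blockEq_Bword_succ_iff hab.le).1 h
  have hpos := mul_pow_pos ha hab n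
  have hlt := mul_pow_lt_pow_succ hab n
  refine ⟨?_, hmid, ?_⟩
  · convert hsub (a * b ^ n - 1) (by omega) using 1
    rw [blockOffset_of_lt (by omega), spacerOffset]
    push_cast [Nat.cast_sub hpos]
    ring
  · convert hsub (a * b ^ n) hlt using 1
    rw [← add_zero (a * b ^ n), blockOffset_add]
    push_cast
    ring

theorem IsSpacer.of_succ (ha : 0 < a) (hab : a < b) (h : IsSpacer b a (n + 1) x s) :
    IsSpacer b a n x s := by
  obtain ⟨hleft, hone, hright⟩ := h
  have hlast := blockOffset_pow_sub_one_add hab n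
  have hpow : 0 < b ^ (n + 1) := Nat.pow_pos (by omega)
  refine ⟨?_, hone, ?_⟩
  · convert ((blockEq_Bword_succ_iff hab.le).1 hleft).2 (b ^ (n + 1) - 1) (by omega) using 1
    omega
  · simpa [blockOffset_zero ha hab] using ((blockEq_Bword_succ_iff hab.le).1 hright).2 0 hpow

theorem BlockEq.isExpected_or_isSpacer (ha : 0 < a) (hab : a < b)
    (h : BlockEq x m (Bword b a (n + 1))) :
    IsExpected b a (n + 1) x m ∨ IsSpacer b a (n + 1) x (m + spacerOffset b a n) :=
  or_iff_not_imp_right.2 fun hs => ⟨h.isSpacer ha hab, hs⟩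

end Words

section LimitWord

variable {b a n i j : ℕ} {p q s t : ℤ}

/-- In the one-sided limit `y` of the words `B k`, decomposed into copies of `B n` indexed from
`0`, a `1` separates the `j`-th copy from its predecessor: it is either the middle `1` of a copy
of `B (n + 1)`, or it already separates two copies of `B (n + 1)`. -/
inductive SpacerBefore (b a : ℕ) : ℕ → ℕ → Prop
  | middle (n j : ℕ) : SpacerBefore b a n (b ^ (n + 1) * j + a * b ^ n)
  | lift {n j : ℕ} : SpacerBefore b a (n + 1) j → SpacerBefore b a n (b ^ (n + 1) * j)

theorem spacerBefore_mul_add_iff (hab : a < b) {r : ℕ} (hr : r < b ^ (n + 1)) :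
    SpacerBefore b a n (b ^ (n + 1) * j + r) ↔
      r = a * b ^ n ∨ r = 0 ∧ SpacerBefore b a (n + 1) j := by
  have hpos : 0 < b ^ (n + 1) := by omega
  have huniq {j' r' : ℕ} (hr' : r' < b ^ (n + 1))
      (h : b ^ (n + 1) * j + r = b ^ (n + 1) * j' + r') : j = j' ∧ r = r' := by
    obtain ⟨hdiv, hmod⟩ := (Nat.div_mod_unique hpos).2 ⟨add_comm r (b ^ (n + 1) * j), hr⟩
    obtain ⟨hdiv', hmod'⟩ := (Nat.div_mod_unique hpos).2 ⟨add_comm r' (b ^ (n + 1) * j'), hr'⟩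
    exact ⟨by rw [← hdiv, h, hdiv'], by rw [← hmod, h, hmod']⟩
  constructor
  · generalize hk : b ^ (n + 1) * j + r = k
    rintro (⟨_, j'⟩ | @⟨_, j', h⟩)
    · exact .inl (huniq (mul_pow_lt_pow_succ hab n) hk).2
    · obtain ⟨rfl, rfl⟩ := huniq (r' := 0) hpos hk
      exact .inr ⟨rfl, h⟩
  · rintro (rfl | ⟨rfl, h⟩)
    · exact .middle n j
    · exact .lift h

theorem SpacerBefore.pos (ha : 0 < a) (hab : a < b) (h : SpacerBefore b a n j) : 0 < j := by
  induction h with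
  | middle n j => exact Nat.add_pos_right _ (mul_pow_pos ha hab n)
  | lift _ ih => exact Nat.mul_pos (Nat.pow_pos (by omega)) ih

theorem SpacerBefore.dvd (h : SpacerBefore b a n j) : b ^ n ∣ j := by
  cases h with
  | middle _ q => exact dvd_add (dvd_mul_of_dvd_left (pow_dvd_pow b n.le_succ) q) (dvd_mul_left _ a)
  | @lift _ q _ => exact dvd_mul_of_dvd_left (pow_dvd_pow b n.le_succ) q

open Classical in
/-- The position in the limit word `y` of its `j`-th copy of `B n`. -/
noncomputable def blockStart (b a n : ℕ) : ℕ → ℕ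
  | 0 => 0
  | j + 1 => blockStart b a n j + hseq b n + if SpacerBefore b a n (j + 1) then 1 else 0

theorem blockStart_succ_of_spacerBefore (h : SpacerBefore b a n (j + 1)) :
    blockStart b a n (j + 1) = blockStart b a n j + hseq b n + 1 := by
  rw [blockStart, if_pos h]

theorem blockStart_succ_of_not_spacerBefore (h : ¬ SpacerBefore b a n (j + 1)) :
    blockStart b a n (j + 1) = blockStart b a n j + hseq b n := by
  rw [blockStart, if_neg h, add_zero]

theorem blockStart_add_hseq_le (b a n j : ℕ) :
    blockStart b a n j + hseq b n ≤ blockStart b a n (j + 1) := by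
  rw [blockStart]
  omega

theorem strictMono_blockStart (b a n : ℕ) : StrictMono (blockStart b a n) :=
  strictMono_nat_of_lt_succ fun j => by
    have := blockStart_add_hseq_le b a n j
    have := hseq_pos b n
    omega

theorem blockStart_mul_add_eq_add_blockOffset (ha : 0 < a) (hab : a < b) {r : ℕ}
    (hr : r < b ^ (n + 1)) :
    blockStart b a n (b ^ (n + 1) * j + r) =
      blockStart b a n (b ^ (n + 1) * j) + blockOffset b a n r := by
  classical
  induction r with
  | zero => rw [blockOffset_zero ha hab, add_zero, add_zero]
  | succ r ih =>
    have hiff : SpacerBefore b a n (b ^ (n + 1) * j + r + 1) ↔ r + 1 = a * b ^ n := by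
      rw [add_assoc, spacerBefore_mul_add_iff hab hr]
      simp
    rw [← add_assoc, blockStart, ih (by omega), if_congr hiff rfl rfl, blockOffset, blockOffset,
      Nat.succ_mul]
    split_ifs <;> omega

theorem blockStart_pow_mul (ha : 0 < a) (hab : a < b) (n j : ℕ) :
    blockStart b a n (b ^ (n + 1) * j) = blockStart b a (n + 1) j := by
  classical
  have hpos : 0 < b ^ (n + 1) := Nat.pow_pos (by omega)
  induction j with
  | zero => rfl
  | succ j ih =>
    have hindex : b ^ (n + 1) * (j + 1) = b ^ (n + 1) * j + (b ^ (n + 1) - 1) + 1 := by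
      rw [Nat.mul_succ]
      omega
    have hiff : SpacerBefore b a n (b ^ (n + 1) * (j + 1)) ↔ SpacerBefore b a (n + 1) (j + 1) := by
      simpa [(mul_pow_pos ha hab n).ne] using spacerBefore_mul_add_iff (j := j + 1) hab hpos
    rw [hindex, blockStart, ← hindex, if_congr hiff rfl rfl,
      blockStart_mul_add_eq_add_blockOffset ha hab (by omega), ih, blockStart,
      ← blockOffset_pow_sub_one_add hab n, ← add_assoc]

theorem blockStart_mul_add (ha : 0 < a) (hab : a < b) {r : ℕ} (hr : r < b ^ (n + 1)) :
    blockStart b a n (b ^ (n + 1) * j + r) = blockStart b a (n + 1) j + blockOffset b a n r := by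
  rw [blockStart_mul_add_eq_add_blockOffset ha hab hr, blockStart_pow_mul ha hab]

/-- The position `p` starts a copy of `B n` in the decomposition of the limit word. -/
def IsLimitBlock (b a n : ℕ) (p : ℤ) : Prop := ∃ j : ℕ, p = blockStart b a n j

/-- The position `s` carries a `1` between two consecutive copies of `B n` in the decomposition
of the limit word. -/
def IsLimitSpacer (b a n : ℕ) (s : ℤ) : Prop :=
  ∃ j : ℕ, SpacerBefore b a n j ∧ s + 1 = blockStart b a n j

theorem isLimitBlock_zero (b a n : ℕ) : IsLimitBlock b a n 0 := ⟨0, rfl⟩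

theorem IsLimitBlock.add_hseq_le (hp : IsLimitBlock b a n p) (hq : IsLimitBlock b a n q)
    (hpq : p < q) : p + hseq b n ≤ q := by
  obtain ⟨i, rfl⟩ := hp
  obtain ⟨j, rfl⟩ := hq
  have hij : i + 1 ≤ j := (strictMono_blockStart b a n).lt_iff_lt.1 (by exact_mod_cast hpq)
  have := (strictMono_blockStart b a n).monotone hij
  have := blockStart_add_hseq_le b a n i
  omega

theorem IsLimitBlock.add_blockOffset (ha : 0 < a) (hab : a < b) (hp : IsLimitBlock b a (n + 1) p)
    (hi : i < b ^ (n + 1)) : IsLimitBlock b a n (p + blockOffset b a n i) := by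
  obtain ⟨j, rfl⟩ := hp
  exact ⟨_, by rw [blockStart_mul_add ha hab hi, Nat.cast_add]⟩

theorem IsLimitBlock.isLimitBlock_sub_or_isLimitSpacer (hp : IsLimitBlock b a n p) (hpos : 0 < p) :
    IsLimitBlock b a n (p - hseq b n) ∨ IsLimitSpacer b a n (p - 1) := by
  obtain ⟨_ | j, rfl⟩ := hp
  · exact absurd hpos (lt_irrefl _)
  by_cases h : SpacerBefore b a n (j + 1)
  · exact .inr ⟨j + 1, h, sub_add_cancel _ _⟩
  · exact .inl ⟨j, by rw [blockStart_succ_of_not_spacerBefore h]; push_cast; ring⟩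

theorem exists_isLimitBlock_add (b a n P : ℕ) : ∃ c ≤ hseq b n, IsLimitBlock b a n (c + P) := by
  induction P with
  | zero => exact ⟨0, Nat.zero_le _, isLimitBlock_zero b a n⟩
  | succ P ih =>
    obtain ⟨_ | c, hc, j, hj⟩ := ih
    · have := blockStart_add_hseq_le b a n j
      have := hseq_pos b n
      refine ⟨blockStart b a n (j + 1) - (P + 1), ?_, j + 1, by omega⟩
      rw [blockStart]
      split_ifs <;> omega
    · exact ⟨c, by omega, j, by rw [← hj]; push_cast; ring⟩

theorem IsLimitBlock.isLimitSpacer (ha : 0 < a) (hab : a < b) (hp : IsLimitBlock b a (n + 1) p) :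
    IsLimitSpacer b a n (p + spacerOffset b a n) := by
  obtain ⟨j, rfl⟩ := hp
  refine ⟨_, .middle n j, ?_⟩
  rw [blockStart_mul_add ha hab (mul_pow_lt_pow_succ hab n), ← add_zero (a * b ^ n),
    blockOffset_add]
  push_cast
  ring

theorem IsLimitSpacer.isLimitBlock_add_one (hs : IsLimitSpacer b a n s) :
    IsLimitBlock b a n (s + 1) :=
  let ⟨j, _, h⟩ := hs
  ⟨j, h⟩

theorem IsLimitSpacer.isLimitBlock_sub_hseq (ha : 0 < a) (hab : a < b)
    (hs : IsLimitSpacer b a n s) : IsLimitBlock b a n (s - hseq b n) := by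
  obtain ⟨j, hj, hs⟩ := hs
  obtain ⟨j, rfl⟩ := Nat.exists_eq_add_one.2 (hj.pos ha hab)
  rw [blockStart_succ_of_spacerBefore hj] at hs
  exact ⟨j, by omega⟩

theorem IsLimitSpacer.of_succ (ha : 0 < a) (hab : a < b) (hs : IsLimitSpacer b a (n + 1) s) :
    IsLimitSpacer b a n s := by
  obtain ⟨j, hj, hs⟩ := hs
  exact ⟨_, hj.lift, by rw [hs, blockStart_pow_mul ha hab]⟩

theorem IsLimitSpacer.of_le {m : ℕ} (ha : 0 < a) (hab : a < b) (hmn : m ≤ n)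
    (hs : IsLimitSpacer b a n s) : IsLimitSpacer b a m s :=
  Nat.decreasingInduction (motive := fun k _ => IsLimitSpacer b a k s)
    (fun _ _ h => h.of_succ ha hab) hs hmn

theorem IsLimitSpacer.succ_or_isLimitBlock (ha : 0 < a) (hab : a < b)
    (hs : IsLimitSpacer b a n s) :
    IsLimitSpacer b a (n + 1) s ∨ IsLimitBlock b a (n + 1) (s - spacerOffset b a n) := by
  obtain ⟨_, ⟨_, j⟩ | @⟨_, j, hj⟩, hs⟩ := hs
  · rw [blockStart_mul_add ha hab (mul_pow_lt_pow_succ hab n), ← add_zero (a * b ^ n),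
      blockOffset_add] at hs
    exact .inr ⟨j, by push_cast at hs; linarith⟩
  · exact .inl ⟨j, hj, by rw [hs, blockStart_pow_mul ha hab]⟩

theorem IsLimitSpacer.isLimitBlock_add_mul (hs : IsLimitSpacer b a n s) (hi : i < b ^ n) :
    IsLimitBlock b a n (s + 1 + (i * hseq b n : ℕ)) := by
  obtain ⟨j, hj, hs⟩ := hs
  refine ⟨j + i, ?_⟩
  rw [hs, ← Nat.cast_add, Nat.cast_inj]
  induction i with
  | zero => simp
  | succ i ih =>
    have hno : ¬ SpacerBefore b a n (j + i + 1) := fun h =>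
      Nat.not_dvd_of_pos_of_lt i.succ_pos hi ((Nat.dvd_add_right hj.dvd).1 h.dvd)
    rw [← add_assoc, blockStart_succ_of_not_spacerBefore hno, ← ih (by omega), Nat.succ_mul,
      add_assoc]

theorem IsLimitBlock.lt_or_add_hseq_le (ha : 0 < a) (hab : a < b) (hp : IsLimitBlock b a n p)
    (hs : IsLimitSpacer b a n s) : s < p ∨ p + hseq b n ≤ s := by
  obtain ⟨i, hi, hs⟩ := hs
  obtain ⟨j, rfl⟩ := hp
  obtain ⟨i, rfl⟩ := Nat.exists_eq_add_one.2 (hi.pos ha hab)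
  have hmono := (strictMono_blockStart b a n).monotone
  rcases Nat.lt_or_ge i j with hij | hij
  · have : blockStart b a n (i + 1) ≤ blockStart b a n j := hmono hij
    omega
  · have := hmono hij
    rw [blockStart_succ_of_spacerBefore hi] at hs
    omega

theorem IsLimitSpacer.add_mul_hseq_lt (ha : 0 < a) (hab : a < b) (hs : IsLimitSpacer b a n s)
    (ht : IsLimitSpacer b a n t) (hst : s < t) : s + (b ^ n * hseq b n : ℕ) < t := by
  suffices h : ∀ i ≤ b ^ n, s + (i * hseq b n : ℕ) < t from h _ le_rfl
  intro i hi
  induction i with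
  | zero => simpa using hst
  | succ i ih =>
    have := ih (by omega)
    have := (hs.isLimitBlock_add_mul (i := i) (by omega)).lt_or_add_hseq_le ha hab ht
    rw [Nat.succ_mul]
    omega

open Classical in
/-- The limit word `y`, for which `B k` is a prefix for all `k`, extended by `1` to the left. -/
noncomputable def limitWord (b a : ℕ) (z : ℤ) : ℕ := if IsLimitBlock b a 0 z then 0 else 1

theorem limitWord_eq_zero_iff : limitWord b a p = 0 ↔ IsLimitBlock b a 0 p := by
  simp [limitWord]

theorem IsLimitSpacer.limitWord_eq_one (ha : 0 < a) (hab : a < b) (hs : IsLimitSpacer b a n s) :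
    limitWord b a s = 1 := by
  refine if_neg fun hp => ?_
  have := hp.lt_or_add_hseq_le ha hab (hs.of_le ha hab n.zero_le)
  have := hseq_pos b 0
  omega

theorem IsLimitBlock.blockEq (ha : 0 < a) (hab : a < b) (hp : IsLimitBlock b a n p) :
    BlockEq (limitWord b a) p (Bword b a n) := by
  induction n generalizing p with
  | zero => exact blockEq_singleton_iff.2 (limitWord_eq_zero_iff.2 hp)
  | succ n ih =>
    exact (blockEq_Bword_succ_iff hab.le).2
      ⟨(hp.isLimitSpacer ha hab).limitWord_eq_one ha hab,
        fun i hi => ih (hp.add_blockOffset ha hab hi)⟩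

theorem IsLimitSpacer.isSpacer (ha : 0 < a) (hab : a < b) (hs : IsLimitSpacer b a n s) :
    IsSpacer b a n (limitWord b a) s :=
  ⟨(hs.isLimitBlock_sub_hseq ha hab).blockEq ha hab, hs.limitWord_eq_one ha hab,
    hs.isLimitBlock_add_one.blockEq ha hab⟩

/-- If the middle `1` of a copy of `B (n + 1)` at `s` were a spacer of level `n + 1`, the middles
of the two occurrences of `B (n + 1)` beside `s` would be spacers of the limit word that are too
close to each other. -/
theorem isLimitSpacer_of_isSpacer (ha : 0 < a) (hab : a < b)
    (hs : IsSpacer b a n (limitWord b a) s) : IsLimitSpacer b a n s := by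
  induction n generalizing s with
  | zero =>
    obtain ⟨hleft, hone, -⟩ := hs
    have hprev := limitWord_eq_zero_iff.1 (blockEq_singleton_iff.1 hleft)
    have hnot : ¬ IsLimitBlock b a 0 s := fun h => by simp [limitWord, h] at hone
    obtain ⟨j, hj⟩ := hprev
    by_cases hspacer : SpacerBefore b a 0 (j + 1)
    · exact ⟨j + 1, hspacer, by rw [blockStart_succ_of_spacerBefore hspacer]; omega⟩
    · exact absurd ⟨j + 1, by rw [blockStart_succ_of_not_spacerBefore hspacer]; omega⟩ hnot
  | succ n ih =>
    refine (ih (hs.of_succ ha hab)).succ_or_isLimitBlock ha hab |>.resolve_right fun hblock => ?_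
    obtain ⟨hleft, -, hright⟩ := hs
    have hoff := hseq_le_spacerOffset ha hab n
    have hoff' := spacerOffset_add_hseq_lt hab n
    have hpos := hseq_pos b n
    have hspacer_left : IsLimitSpacer b a (n + 1) (s - hseq b (n + 1) + spacerOffset b a n) := by
      refine (ih (hleft.isSpacer ha hab)).succ_or_isLimitBlock ha hab |>.resolve_right fun h => ?_
      have := h.add_hseq_le hblock (by omega)
      omega
    have hspacer_right : IsLimitSpacer b a (n + 1) (s + 1 + spacerOffset b a n) := by
      refine (ih (hright.isSpacer ha hab)).succ_or_isLimitBlock ha hab |>.resolve_right fun h => ?_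
      have := hblock.add_hseq_le h (by omega)
      omega
    have hfar := hspacer_left.add_mul_hseq_lt ha hab hspacer_right (by omega)
    have hpow : 2 ≤ b ^ (n + 1) := (show 2 ≤ b by omega).trans (Nat.le_self_pow n.succ_ne_zero b)
    have := Nat.mul_le_mul_right (hseq b (n + 1)) hpow
    omega

theorem isSpacer_limitWord_iff (ha : 0 < a) (hab : a < b) :
    IsSpacer b a n (limitWord b a) s ↔ IsLimitSpacer b a n s :=
  ⟨isLimitSpacer_of_isSpacer ha hab, fun hs => hs.isSpacer ha hab⟩

theorem isExpected_limitWord_iff (ha : 0 < a) (hab : a < b) :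
    IsExpected b a n (limitWord b a) p ↔ IsLimitBlock b a n p := by
  cases n with
  | zero => exact limitWord_eq_zero_iff
  | succ n =>
    rw [IsExpected, isSpacer_limitWord_iff ha hab, isSpacer_limitWord_iff ha hab]
    refine ⟨fun ⟨hs, hns⟩ => ?_, fun hp => ⟨hp.isLimitSpacer ha hab, fun hs => ?_⟩⟩
    · simpa using (hs.succ_or_isLimitBlock ha hab).resolve_left hns
    · have := hp.lt_or_add_hseq_le ha hab hs
      have := spacerOffset_add_hseq_lt hab n
      omega

end LimitWord

section OrbitClosure

variable {b a n i k : ℕ} {x : ℤ → ℕ} {m p q s t : ℤ} {w : List ℕ}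

theorem iterate_shiftMap_apply (k : ℕ) (x : ℤ → ℕ) (m : ℤ) : shiftMap^[k] x m = x (m + k) := by
  induction k generalizing x with
  | zero => simp
  | succ k ih =>
    rw [Function.iterate_succ_apply, ih, shiftMap]
    congr 1
    push_cast
    ring

theorem blockEq_iterate_shiftMap_iff :
    BlockEq (shiftMap^[k] x) m w ↔ BlockEq x (m + k) w := by
  simp only [BlockEq, iterate_shiftMap_apply, add_right_comm]

theorem isSpacer_iterate_shiftMap_iff :
    IsSpacer b a n (shiftMap^[k] x) s ↔ IsSpacer b a n x (s + k) := by
  simp only [IsSpacer, blockEq_iterate_shiftMap_iff, iterate_shiftMap_apply, sub_add_eq_add_sub,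
    add_right_comm s 1]

theorem isExpected_iterate_shiftMap_iff :
    IsExpected b a n (shiftMap^[k] x) p ↔ IsExpected b a n x (p + k) := by
  cases n with
  | zero => simp only [IsExpected, iterate_shiftMap_apply]
  | succ n => simp only [IsExpected, isSpacer_iterate_shiftMap_iff, add_right_comm]

theorem isClopen_setOf_blockEq (m : ℤ) (w : List ℕ) : IsClopen {x : ℤ → ℕ | BlockEq x m w} := by
  have hcont : Continuous fun (x : ℤ → ℕ) (i : Fin w.length) => x (m + i) := by fun_prop
  have hclopen := (isClopen_discrete {fun i : Fin w.length => w.getD i 0}).preimage hcont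
  convert hclopen using 1
  ext x
  exact ⟨fun h => funext fun i => h i i.2, fun h i hi => congrFun h ⟨i, hi⟩⟩

theorem isClopen_setOf_isSpacer (b a n : ℕ) (s : ℤ) :
    IsClopen {x : ℤ → ℕ | IsSpacer b a n x s} :=
  (isClopen_setOf_blockEq _ _).inter
    (((isClopen_discrete {1}).preimage (continuous_apply s)).inter (isClopen_setOf_blockEq _ _))

theorem isClopen_setOf_isExpected (b a n : ℕ) (p : ℤ) :
    IsClopen {x : ℤ → ℕ | IsExpected b a n x p} := by
  cases n with
  | zero => exact (isClopen_discrete {0}).preimage (continuous_apply p)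
  | succ n => exact (isClopen_setOf_isSpacer ..).inter (isClopen_setOf_isSpacer ..).compl

theorem exists_tendsto_iterate_shiftMap_limitWord (ha : 0 < a) (hab : a < b) (hx : InX b a x) :
    ∃ u : ℕ → ℕ, Tendsto u atTop atTop ∧
      Tendsto (fun W => shiftMap^[u W] (limitWord b a)) atTop (𝓝 x) := by
  have hwindow (W : ℕ) : ∃ P : ℕ, W ≤ P ∧
      ∀ z : ℤ, -W ≤ z → z ≤ W → limitWord b a (z + P) = x z := by
    obtain ⟨k, p, hle, heq⟩ := hx (-W) (2 * W + 1)
    rw [List.length_ofFn] at hle heq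
    refine ⟨p + W, by omega, fun z hz hz' => ?_⟩
    obtain ⟨i, rfl⟩ : ∃ i : ℕ, z = -W + i := ⟨(z + W).toNat, by omega⟩
    have hi : i < 2 * W + 1 := by omega
    have hprefix := (isLimitBlock_zero b a k).blockEq ha hab (p + i) (by omega)
    have hget := congrArg (fun l => l.getD i 0) heq
    simp only [List.getD_eq_getElem?_getD, List.getElem?_take_of_lt hi, List.getElem?_drop,
      List.getElem?_ofFn, hi, dif_pos, Option.getD_some] at hget
    rw [List.getD_eq_getElem?_getD, hget] at hprefix
    convert hprefix using 2
    push_cast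
    ring
  choose u hu hux using hwindow
  refine ⟨u, tendsto_atTop_mono hu tendsto_id, tendsto_pi_nhds.2 fun z => ?_⟩
  refine tendsto_const_nhds.congr' ?_
  filter_upwards [eventually_ge_atTop z.natAbs] with W hW
  rw [iterate_shiftMap_apply, hux W z (by omega) (by omega)]

theorem InX.of_eventually_limitWord {P : (ℤ → ℕ) → Prop} (ha : 0 < a) (hab : a < b)
    (hx : InX b a x) (hclosed : IsClosed {x | P x})
    (h : ∀ᶠ k in atTop, P (shiftMap^[k] (limitWord b a))) : P x :=
  let ⟨_, hu, hux⟩ := exists_tendsto_iterate_shiftMap_limitWord ha hab hx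
  hclosed.mem_of_tendsto hux (hu.eventually h)

theorem isSpacer_iterate_limitWord_iff (ha : 0 < a) (hab : a < b) :
    IsSpacer b a n (shiftMap^[k] (limitWord b a)) s ↔ IsLimitSpacer b a n (s + k) := by
  rw [isSpacer_iterate_shiftMap_iff, isSpacer_limitWord_iff ha hab]

theorem isExpected_iterate_limitWord_iff (ha : 0 < a) (hab : a < b) :
    IsExpected b a n (shiftMap^[k] (limitWord b a)) p ↔ IsLimitBlock b a n (p + k) := by
  rw [isExpected_iterate_shiftMap_iff, isExpected_limitWord_iff ha hab]

theorem IsSpacer.isExpected_add_mul (ha : 0 < a) (hab : a < b) (hx : InX b a x) (hi : i < b ^ n)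
    (hs : IsSpacer b a n x s) : IsExpected b a n x (s + 1 + (i * hseq b n : ℕ)) := by
  revert hs
  refine hx.of_eventually_limitWord ha hab (isClosed_imp (isClopen_setOf_isSpacer ..).isOpen
    (isClopen_setOf_isExpected ..).isClosed) (.of_forall fun k => ?_)
  rw [isSpacer_iterate_limitWord_iff ha hab, isExpected_iterate_limitWord_iff ha hab,
    add_right_comm, add_right_comm s]
  exact fun hs => hs.isLimitBlock_add_mul hi

theorem IsSpacer.add_mul_hseq_lt (ha : 0 < a) (hab : a < b) (hx : InX b a x)
    (hs : IsSpacer b a n x s) (ht : IsSpacer b a n x t) (hst : s < t) :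
    s + (b ^ n * hseq b n : ℕ) < t := by
  revert hs ht
  refine hx.of_eventually_limitWord ha hab (isClosed_imp (isClopen_setOf_isSpacer ..).isOpen
    (isClosed_imp (isClopen_setOf_isSpacer ..).isOpen isClosed_const)) (.of_forall fun k => ?_)
  rw [isSpacer_iterate_limitWord_iff ha hab, isSpacer_iterate_limitWord_iff ha hab]
  intro hs ht
  linarith [hs.add_mul_hseq_lt ha hab ht (by omega)]

theorem IsExpected.add_blockOffset (ha : 0 < a) (hab : a < b) (hx : InX b a x)
    (hi : i < b ^ (n + 1)) (hp : IsExpected b a (n + 1) x p) :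
    IsExpected b a n x (p + blockOffset b a n i) := by
  revert hp
  refine hx.of_eventually_limitWord ha hab (isClosed_imp (isClopen_setOf_isExpected ..).isOpen
    (isClopen_setOf_isExpected ..).isClosed) (.of_forall fun k => ?_)
  rw [isExpected_iterate_limitWord_iff ha hab, isExpected_iterate_limitWord_iff ha hab,
    add_right_comm]
  exact fun hp => hp.add_blockOffset ha hab hi

theorem IsExpected.blockEq (ha : 0 < a) (hab : a < b) (hx : InX b a x)
    (hp : IsExpected b a n x p) : BlockEq x p (Bword b a n) := by
  revert hp
  refine hx.of_eventually_limitWord ha hab (isClosed_imp (isClopen_setOf_isExpected ..).isOpen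
    (isClopen_setOf_blockEq ..).isClosed) (.of_forall fun k => ?_)
  rw [isExpected_iterate_limitWord_iff ha hab, blockEq_iterate_shiftMap_iff]
  exact fun hp => hp.blockEq ha hab

theorem IsExpected.add_hseq_le (ha : 0 < a) (hab : a < b) (hx : InX b a x)
    (hp : IsExpected b a n x p) (hq : IsExpected b a n x q) (hpq : p < q) :
    p + hseq b n ≤ q := by
  revert hp hq
  refine hx.of_eventually_limitWord ha hab (isClosed_imp (isClopen_setOf_isExpected ..).isOpen
    (isClosed_imp (isClopen_setOf_isExpected ..).isOpen isClosed_const)) (.of_forall fun k => ?_)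
  rw [isExpected_iterate_limitWord_iff ha hab, isExpected_iterate_limitWord_iff ha hab]
  intro hp hq
  linarith [hp.add_hseq_le hq (by omega)]

theorem IsExpected.isExpected_sub_or_isSpacer (ha : 0 < a) (hab : a < b) (hx : InX b a x)
    (hp : IsExpected b a n x p) :
    IsExpected b a n x (p - hseq b n) ∨ IsSpacer b a n x (p - 1) := by
  revert hp
  refine hx.of_eventually_limitWord (P := fun x => IsExpected b a n x p →
    IsExpected b a n x (p - hseq b n) ∨ IsSpacer b a n x (p - 1)) ha hab
    (isClosed_imp (isClopen_setOf_isExpected ..).isOpen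
      ((isClopen_setOf_isExpected ..).isClosed.union (isClopen_setOf_isSpacer ..).isClosed)) ?_
  filter_upwards [eventually_gt_atTop p.natAbs] with k hk
  rw [isExpected_iterate_limitWord_iff ha hab, isExpected_iterate_limitWord_iff ha hab,
    isSpacer_iterate_limitWord_iff ha hab, sub_add_eq_add_sub, sub_add_eq_add_sub]
  exact fun hp => hp.isLimitBlock_sub_or_isLimitSpacer (by omega)

theorem InX.exists_isSpacer (ha : 0 < a) (hab : a < b) (hx : InX b a x) (n : ℕ) :
    ∃ s : ℤ, IsSpacer b a n x s := by
  suffices h : ∃ c ∈ Set.Iic (hseq b (n + 1)), IsSpacer b a n x (c + spacerOffset b a n) from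
    let ⟨_, _, hc⟩ := h
    ⟨_, hc⟩
  refine hx.of_eventually_limitWord (P := fun x => ∃ c ∈ Set.Iic (hseq b (n + 1)),
    IsSpacer b a n x (c + spacerOffset b a n)) ha hab ?_ (.of_forall fun k => ?_)
  · convert (Set.finite_Iic (hseq b (n + 1))).isClosed_biUnion fun c _ =>
      (isClopen_setOf_isSpacer b a n (c + spacerOffset b a n)).isClosed using 1
    ext y
    simp
  · obtain ⟨c, hc, hblock⟩ := exists_isLimitBlock_add b a (n + 1) k
    refine ⟨c, hc, (isSpacer_iterate_limitWord_iff ha hab).2 ?_⟩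
    rw [add_right_comm]
    exact hblock.isLimitSpacer ha hab

end OrbitClosure

section MassTransport

variable {α : Type*} [MeasurableSpace α] {μ : Measure α}

theorem measureReal_le_of_ae [IsFiniteMeasure μ] {A B : Set α} (h : ∀ᵐ x ∂μ, x ∈ A → x ∈ B) :
    μ.real A ≤ μ.real B :=
  ENNReal.toReal_mono (measure_ne_top μ B) (measure_mono_ae h)

theorem measureReal_symmDiff_eq_two_mul [IsFiniteMeasure μ] {A B : Set α} (hA : MeasurableSet A)
    (hB : MeasurableSet B) (hAB : μ.real A = μ.real B) :
    μ.real (symmDiff A B) = 2 * μ.real (B \ A) := by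
  have hA' := measureReal_inter_add_sdiff (μ := μ) (s := A) hB
  have hB' := measureReal_inter_add_sdiff (μ := μ) (s := B) hA
  rw [Set.inter_comm] at hB'
  rw [measureReal_symmDiff_eq hA hB]
  linarith

theorem mul_measureReal_le_of_ae_disjoint [IsFiniteMeasure μ] {A : ℕ → Set α} {C : Set α}
    {k : ℕ} {r : ℝ} (hmeas : ∀ i, MeasurableSet (A i)) (hr : ∀ i, μ.real (A i) = r)
    (hdisj : ∀ᵐ x ∂μ, ∀ i < k, ∀ j < k, x ∈ A i → x ∈ A j → i ≤ j)
    (hsub : ∀ᵐ x ∂μ, ∀ i < k, x ∈ A i → x ∈ C) : k * r ≤ μ.real C := by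
  have hae : Set.Pairwise (Finset.range k : Set ℕ) (Function.onFun (AEDisjoint μ) A) := by
    intro i hi j hj hij
    refine measure_mono_null_ae ?_ measure_empty
    filter_upwards [hdisj] with x hx hxij
    have hi := Finset.mem_range.1 hi
    have hj := Finset.mem_range.1 hj
    exact hij ((hx i hi j hj hxij.1 hxij.2).antisymm (hx j hj i hi hxij.2 hxij.1))
  calc k * r = ∑ i ∈ Finset.range k, μ.real (A i) := by simp [hr]
    _ = μ.real (⋃ i ∈ Finset.range k, A i) :=
      (measureReal_biUnion_finset₀ hae fun i _ => (hmeas i).nullMeasurableSet).symm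
    _ ≤ μ.real C := measureReal_le_of_ae <| by
      filter_upwards [hsub] with x hx hmem
      obtain ⟨i, hi, hxi⟩ := Set.mem_iUnion₂.1 hmem
      exact hx i (Finset.mem_range.1 hi) hxi

theorem measureReal_eq_of_preimage_eq_add_one {f : α → α} {S : ℤ → Set α}
    (hf : MeasurePreserving f μ μ) (hmeas : ∀ m, MeasurableSet (S m))
    (hS : ∀ m, f ⁻¹' S m = S (m + 1)) (m : ℤ) : μ.real (S m) = μ.real (S 0) := by
  have hsucc (m : ℤ) : μ.real (S (m + 1)) = μ.real (S m) := by
    rw [← hS, hf.measureReal_preimage (hmeas m).nullMeasurableSet]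
  induction m with
  | zero => rfl
  | succ m ih => rw [hsucc, ih]
  | pred m ih => rw [← hsucc, sub_add_cancel, ih]

end MassTransport

section Densities

variable {b a : ℕ} {μ : Measure (ℤ → ℕ)}

theorem measureReal_setOf_blockEq (hinv : MeasurePreserving shiftMap μ μ) (m : ℤ) (w : List ℕ) :
    μ.real {x | BlockEq x m w} = μ.real {x | BlockEq x 0 w} :=
  measureReal_eq_of_preimage_eq_add_one (S := fun m => {x | BlockEq x m w}) hinv
    (fun m => (isClopen_setOf_blockEq m w).isOpen.measurableSet)
    (fun _ => Set.ext fun _ => blockEq_iterate_shiftMap_iff (k := 1)) m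

theorem measureReal_setOf_isSpacer (hinv : MeasurePreserving shiftMap μ μ) (b a n : ℕ) (s : ℤ) :
    μ.real {x | IsSpacer b a n x s} = μ.real {x | IsSpacer b a n x 0} :=
  measureReal_eq_of_preimage_eq_add_one (S := fun s => {x | IsSpacer b a n x s}) hinv
    (fun s => (isClopen_setOf_isSpacer b a n s).isOpen.measurableSet)
    (fun _ => Set.ext fun _ => isSpacer_iterate_shiftMap_iff (k := 1)) s

theorem measureReal_setOf_isExpected (hinv : MeasurePreserving shiftMap μ μ) (b a n : ℕ) (p : ℤ) :
    μ.real {x | IsExpected b a n x p} = μ.real {x | IsExpected b a n x 0} :=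
  measureReal_eq_of_preimage_eq_add_one (S := fun p => {x | IsExpected b a n x p}) hinv
    (fun p => (isClopen_setOf_isExpected b a n p).isOpen.measurableSet)
    (fun _ => Set.ext fun _ => isExpected_iterate_shiftMap_iff (k := 1)) p

variable [IsFiniteMeasure μ]

theorem pow_mul_measureReal_isSpacer_le (ha : 0 < a) (hab : a < b) (hX : ∀ᵐ x ∂μ, InX b a x)
    (hinv : MeasurePreserving shiftMap μ μ) (n : ℕ) :
    (b : ℝ) ^ n * μ.real {x | IsSpacer b a n x 0} ≤ μ.real {x | IsExpected b a n x 0} := by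
  rw [← Nat.cast_pow]
  refine mul_measureReal_le_of_ae_disjoint
    (A := fun i => {x | IsSpacer b a n x (-1 - (i * hseq b n : ℕ))})
    (fun i => (isClopen_setOf_isSpacer ..).isOpen.measurableSet)
    (fun i => measureReal_setOf_isSpacer hinv ..) ?_ ?_
  · filter_upwards [hX] with x hx i hi j _ hxi hxj
    by_contra! hij
    have hlt := Nat.mul_lt_mul_of_pos_right hij (hseq_pos b n)
    have hle := Nat.mul_le_mul_right (hseq b n) hi.le
    have := hxi.add_mul_hseq_lt ha hab hx hxj (by omega)
    omega
  · filter_upwards [hX] with x hx i hi hxi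
    simpa only [sub_add_cancel, neg_add_cancel, sub_add_eq_add_sub] using
      hxi.isExpected_add_mul ha hab hx hi

theorem pow_succ_mul_measureReal_isExpected_le (ha : 0 < a) (hab : a < b)
    (hX : ∀ᵐ x ∂μ, InX b a x) (hinv : MeasurePreserving shiftMap μ μ) (n : ℕ) :
    (b : ℝ) ^ (n + 1) * μ.real {x | IsExpected b a (n + 1) x 0} ≤
      μ.real {x | IsExpected b a n x 0} := by
  rw [← Nat.cast_pow]
  refine mul_measureReal_le_of_ae_disjoint
    (A := fun i => {x | IsExpected b a (n + 1) x (-blockOffset b a n i)})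
    (fun i => (isClopen_setOf_isExpected ..).isOpen.measurableSet)
    (fun i => measureReal_setOf_isExpected hinv ..) ?_ ?_
  · filter_upwards [hX] with x hx i hi j _ hxi hxj
    by_contra! hij
    have hlt := strictMono_blockOffset b a n hij
    have hle := blockOffset_add_hseq_le (a := a) hi
    have := hxi.add_hseq_le ha hab hx hxj (by omega)
    have := hseq_pos b n
    omega
  · filter_upwards [hX] with x hx i hi hxi
    simpa using hxi.add_blockOffset ha hab hx hi

theorem measureReal_isSpacer_eq_add (ha : 0 < a) (hab : a < b)
    (hinv : MeasurePreserving shiftMap μ μ) (n : ℕ) :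
    μ.real {x | IsSpacer b a n x 0} =
      μ.real {x | IsExpected b a (n + 1) x 0} + μ.real {x | IsSpacer b a (n + 1) x 0} := by
  have hinter : {x | IsSpacer b a n x 0} ∩ {x | IsSpacer b a (n + 1) x 0} =
      {x | IsSpacer b a (n + 1) x 0} := Set.inter_eq_right.2 fun x hx => hx.of_succ ha hab
  have hdiff : {x | IsSpacer b a n x 0} \ {x | IsSpacer b a (n + 1) x 0} =
      {x | IsExpected b a (n + 1) x (-spacerOffset b a n)} := by
    ext x
    simp [IsExpected]
  rw [← measureReal_sdiff_add_inter (s := {x | IsSpacer b a n x 0})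
    (isClopen_setOf_isSpacer b a (n + 1) 0).isOpen.measurableSet, hinter, hdiff,
    measureReal_setOf_isExpected hinv]

theorem measureReal_isSpacer_pos [NeZero μ] (ha : 0 < a) (hab : a < b) (hX : ∀ᵐ x ∂μ, InX b a x)
    (hinv : MeasurePreserving shiftMap μ μ) (n : ℕ) : 0 < μ.real {x | IsSpacer b a n x 0} := by
  refine measureReal_nonneg.lt_of_ne' fun h => ?_
  have hnone : ∀ᵐ x ∂μ, ∀ s : ℤ, ¬ IsSpacer b a n x s :=
    ae_all_iff.2 fun s => measure_eq_zero_iff_ae_notMem.1 <|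
      (measureReal_eq_zero_iff).1 ((measureReal_setOf_isSpacer hinv b a n s).trans h)
  obtain ⟨x, hx, hxnone⟩ := (hX.and hnone).exists
  obtain ⟨s, hs⟩ := hx.exists_isSpacer ha hab n
  exact hxnone s hs

theorem measureReal_unexpected_le (ha : 0 < a) (hab : a < b)
    (hinv : MeasurePreserving shiftMap μ μ) (n : ℕ) :
    μ.real ({x | BlockEq x 0 (Bword b a (n + 1))} \ {x | IsExpected b a (n + 1) x 0}) ≤
      μ.real {x | IsSpacer b a (n + 1) x 0} := by
  rw [← measureReal_setOf_isSpacer hinv b a (n + 1) (0 + spacerOffset b a n)]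
  exact measureReal_mono fun x hx => (hx.1.isExpected_or_isSpacer ha hab).resolve_left hx.2

theorem measureReal_blockEq_eq_add (ha : 0 < a) (hab : a < b) (hX : ∀ᵐ x ∂μ, InX b a x) (n : ℕ) :
    μ.real {x | BlockEq x 0 (Bword b a n)} = μ.real {x | IsExpected b a n x 0} +
      μ.real ({x | BlockEq x 0 (Bword b a n)} \ {x | IsExpected b a n x 0}) := by
  have hinter : ({x | BlockEq x 0 (Bword b a n)} ∩ {x | IsExpected b a n x 0} : Set _) =ᵐ[μ]
      {x | IsExpected b a n x 0} := by
    filter_upwards [hX] with x hx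
    exact propext ⟨fun h => h.2, fun h => ⟨h.blockEq ha hab hx, h⟩⟩
  rw [← measureReal_inter_add_sdiff (s := {x | BlockEq x 0 (Bword b a n)})
    (isClopen_setOf_isExpected b a n 0).isOpen.measurableSet, measureReal_congr hinter]

theorem measureReal_blockEq_diff_le (ha : 0 < a) (hab : a < b) (hX : ∀ᵐ x ∂μ, InX b a x)
    (hinv : MeasurePreserving shiftMap μ μ) (n : ℕ) :
    μ.real ({x | BlockEq x 0 (Bword b a n)} \ {x | BlockEq x (-hseq b n) (Bword b a n)}) ≤
      μ.real {x | IsSpacer b a n x 0} +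
        μ.real ({x | BlockEq x 0 (Bword b a n)} \ {x | IsExpected b a n x 0}) := by
  rw [← measureReal_setOf_isSpacer hinv b a n (0 - 1)]
  refine (measureReal_le_of_ae ?_).trans (measureReal_union_le _ _)
  filter_upwards [hX] with x hx ⟨hblock, hprev⟩
  by_cases hexp : IsExpected b a n x 0
  · refine .inl ((hexp.isExpected_sub_or_isSpacer ha hab hx).resolve_left fun h => hprev ?_)
    simpa using h.blockEq ha hab hx
  · exact .inr ⟨hblock, hexp⟩

theorem two_mul_measureReal_blockEq_diff_mul_pow_lt [NeZero μ] (ha : 0 < a) (hab : a < b)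
    (hX : ∀ᵐ x ∂μ, InX b a x) (hinv : MeasurePreserving shiftMap μ μ) (n : ℕ) :
    2 * μ.real ({x | BlockEq x 0 (Bword b a (n + 1))} \
      {x | BlockEq x (-hseq b (n + 1)) (Bword b a (n + 1))}) * (b : ℝ) ^ n <
      μ.real {x | BlockEq x 0 (Bword b a (n + 1))} := by
  have hdiff := measureReal_blockEq_diff_le ha hab hX hinv (n + 1)
  have hsum := measureReal_blockEq_eq_add (μ := μ) ha hab hX (n + 1)
  have hu := measureReal_unexpected_le (μ := μ) ha hab hinv n
  have hs := measureReal_isSpacer_eq_add (μ := μ) ha hab hinv (n + 1)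
  have hst := pow_mul_measureReal_isSpacer_le ha hab hX hinv (n + 1 + 1)
  have htm := pow_succ_mul_measureReal_isExpected_le ha hab hX hinv (n + 1)
  have hs' := measureReal_isSpacer_pos ha hab hX hinv (n + 1 + 1)
  set m := μ.real {x | IsExpected b a (n + 1) x 0}
  set s := μ.real {x | IsSpacer b a (n + 1) x 0}
  set t := μ.real {x | IsExpected b a (n + 1 + 1) x 0}
  set s' := μ.real {x | IsSpacer b a (n + 1 + 1) x 0}
  set u := μ.real (_ \ {x | IsExpected b a (n + 1) x 0})
  set D := (b : ℝ) ^ n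
  have hb : (2 : ℝ) ≤ b := by exact_mod_cast (by omega : 2 ≤ b)
  have hD : 1 ≤ D := one_le_pow₀ (by linarith)
  have hpow : 4 * D ≤ (b : ℝ) ^ (n + 1 + 1) := by
    calc 4 * D ≤ (b : ℝ) ^ 2 * D := by gcongr; nlinarith
      _ = (b : ℝ) ^ (n + 1 + 1) := by ring
  have hst' : 4 * D * s' ≤ t := (mul_le_mul_of_nonneg_right hpow hs'.le).trans hst
  have ht : 0 < t := lt_of_lt_of_le (by positivity) hst'
  have htm' : 4 * D * t ≤ m := (mul_le_mul_of_nonneg_right hpow ht.le).trans htm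
  have hsm : (4 * D - 1) * s < m := by rw [hs]; linarith
  calc 2 * μ.real (_ \ _) * D ≤ 2 * (s + u) * D := by gcongr
    _ = 2 * D * s + u + (2 * D - 1) * u := by ring
    _ ≤ 2 * D * s + u + (2 * D - 1) * s := by gcongr; linarith
    _ < m + u := by linarith
    _ = _ := hsum.symm

end Densities

section CylinderSet

variable {b a : ℕ} {x : ℤ → ℕ} {μ : Measure (ℤ → ℕ)}

theorem InX.shift (hx : InX b a x) (c : ℤ) : InX b a fun m => x (m + c) := fun m l => by
  simpa only [add_right_comm] using hx (m + c) l

theorem Cset_ae_eq (hX : ∀ᵐ x ∂μ, InX b a x) (n : ℕ) :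
    Cset b a n =ᵐ[μ] {x | BlockEq x 0 (Bword b a n)} := by
  filter_upwards [hX] with x hx
  exact propext (and_iff_right hx)

theorem image_iterate_shiftMap_Cset_ae_eq (hX : ∀ᵐ x ∂μ, InX b a x) (k n : ℕ) :
    (shiftMap^[k] '' Cset b a n : Set _) =ᵐ[μ] {x | BlockEq x (-k) (Bword b a n)} := by
  filter_upwards [hX] with x hx
  refine propext ⟨?_, fun hblock => ⟨fun m => x (m + -k), ⟨hx.shift _, ?_⟩, ?_⟩⟩
  · rintro ⟨y, ⟨-, hy⟩, rfl⟩
    exact blockEq_iterate_shiftMap_iff.2 (by simpa using hy)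
  · intro i hi
    simpa [add_comm] using hblock i hi
  · funext m
    simp [iterate_shiftMap_apply]

end CylinderSet

theorem measure_symmDiff_Cset_general {b a : ℕ} (ha : 1 ≤ a) (hab : a < b)
    (μ : Measure (ℤ → ℕ)) [IsFiniteMeasure μ] [NeZero μ] (hX : ∀ᵐ x ∂μ, InX b a x)
    (hinv : MeasurePreserving shiftMap μ μ) {N : ℕ} (hN : 1 ≤ N) :
    μ (symmDiff (shiftMap^[hseq b N] '' Cset b a N) (Cset b a N)) <
      (1 / (b : ℝ≥0∞) ^ (N - 1)) * μ (Cset b a N) := by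
  obtain ⟨n, rfl⟩ := Nat.exists_eq_add_one.2 hN
  have hb : 0 < b := by omega
  have hlt := two_mul_measureReal_blockEq_diff_mul_pow_lt ha hab hX hinv n
  rw [← measureReal_symmDiff_eq_two_mul (isClopen_setOf_blockEq _ _).isOpen.measurableSet
    (isClopen_setOf_blockEq _ _).isOpen.measurableSet (measureReal_setOf_blockEq hinv _ _),
    ← measureReal_congr ((image_iterate_shiftMap_Cset_ae_eq hX _ _).symmDiff (Cset_ae_eq hX _)),
    ← measureReal_congr (Cset_ae_eq hX _), ← lt_div_iff₀ (by positivity)] at hlt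
  rw [Nat.add_sub_cancel, one_div, mul_comm, ← div_eq_mul_inv,
    ← ENNReal.toReal_lt_toReal (measure_ne_top _ _)
      (ENNReal.div_ne_top (measure_ne_top _ _) (by positivity))]
  simpa [Measure.real] using hlt

/-- for any invariant Borel probability measure `μ` on `X` and `N ≥ 2`,
`μ (σ^{h N} (C N) ∆ C N) < (1 / b^(N-1)) μ (C N)`. -/
theorem measure_symmDiff_Cset (b a : ℕ) (hb : 2 ≤ b) (ha1 : 1 ≤ a) (ha2 : a ≤ b - 1)
    (μ : Measure (ℤ → ℕ)) (hprob : IsProbabilityMeasure μ)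
    (hsupp : μ {y | InX b a y}ᶜ = 0) (hinv : MeasurePreserving shiftMap μ μ)
    (N : ℕ) (hN : 2 ≤ N) :
    μ (symmDiff (shiftMap^[hseq b N] '' Cset b a N) (Cset b a N)) <
      (1 / (b : ℝ≥0∞) ^ (N - 1)) * μ (Cset b a N) :=
  measure_symmDiff_Cset_general ha1 (by omega) μ hsupp hinv (by omega)
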